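/- For every real z with 0 < z < 1, the following identity holds: ln 2 − ∑_{k=0}^∞ ( −(k+2)·((1−z)³·z^k·(k+1)/2)·ln((1−z)³·z^k·(k+1)/2) ) + ∑_{k=0}^∞ ∑_{m=1}^{k+1} ( −(1−z)³·z^k·m·ln((1−z)³·z^k·m) ) = (1−z)³·∑_{k=0}^∞ ((k+1)(k+2)/2)·ln(k+1)·z^k − (1−z)²·∑_{k=2}^∞ k·(ln k)·z^{k−1}. (The right-hand side is the paper's closed form C_p^{(1)} = (1−z)²·∂_z[∂_s Li_s(z)|_{s=0}] − ((1−z)³/2)·∂_z²[z·∂_s Li_s(z)|_{s=0}], expressed in nats, where Li_s(z) = ∑_{k≥1} z^k/k^s.) -/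

import Mathlib

/-!
Both output spectra split into blocks indexed by `k`, with a common scale `a = (1 - z)³ zᵏ`:
in block `k` the mixed input gives `k + 2` copies of `a (k + 1) / 2` and the pure input gives
`a m` for `0 ≤ m ≤ k + 1`. The two lists have the same sum `a (k + 1) (k + 2) / 2`, so by
`η (a x) = x η a + a η x` for `η x = -x log x` the dependence on `η a`, which carries all of
`log z` and `log (1 - z)`, is the same in both entropies and cancels.

What remains of the mixed entropy is a negative binomial series, giving `log 2`, and the first
series of the closed form. What remains of the pure entropy is the generating function of the
partial sums of `m log m`, that is `(1 - z)⁻¹` times the second series.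
-/

open Asymptotics Filter Finset Real

lemma isBigO_natCast_add_const (b : ℝ) :
    (fun k : ℕ ↦ (k : ℝ) + b) =O[atTop] fun k : ℕ ↦ (k : ℝ) :=
  (isBigO_refl _ _).add
    ((isLittleO_const_id_atTop b).comp_tendsto tendsto_natCast_atTop_atTop).isBigO

lemma isBigO_log_natCast_add_const (b : ℝ) :
    (fun k : ℕ ↦ log ((k : ℝ) + b)) =O[atTop] fun k : ℕ ↦ (k : ℝ) :=
  (isLittleO_log_id_atTop.comp_tendsto
    (tendsto_atTop_add_const_right _ b tendsto_natCast_atTop_atTop)).isBigO.trans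
      (isBigO_natCast_add_const b)

lemma isBigO_negMulLog_natCast_add_const (b : ℝ) :
    (fun k : ℕ ↦ negMulLog ((k : ℝ) + b)) =O[atTop] fun k : ℕ ↦ (k : ℝ) ^ 2 := by
  simpa only [negMulLog, neg_mul, sq] using
    ((isBigO_natCast_add_const b).mul (isBigO_log_natCast_add_const b)).neg_left

lemma summable_norm_mul_geometric_of_isBigO_pow {F : Type*} [NormedRing F] [NormOneClass F]
    [NormMulClass F] {u : ℕ → F} {d : ℕ} {z : F} (hz : ‖z‖ < 1)
    (hu : u =O[atTop] fun k : ℕ ↦ (k : F) ^ d) : Summable fun k ↦ ‖u k * z ^ k‖ :=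
  summable_norm_mul_geometric_of_norm_lt_one' hz (by simpa only [Nat.cast_pow] using hu)

lemma hasSum_sum_range_mul_geometric {𝕜 : Type*} [NormedField 𝕜] [CompleteSpace 𝕜]
    {u : ℕ → 𝕜} {z : 𝕜} (hz : ‖z‖ < 1) (hu : Summable fun k ↦ ‖u k * z ^ k‖) :
    HasSum (fun k ↦ (∑ i ∈ range (k + 1), u i) * z ^ k) ((∑' k, u k * z ^ k) * (1 - z)⁻¹) := by
  rw [← tsum_geometric_of_norm_lt_one hz]
  convert! hasSum_sum_range_mul_of_summable_norm hu (summable_norm_geometric_of_norm_lt_one hz)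
    using 2 with k
  rw [sum_mul]
  refine sum_congr rfl fun i hi ↦ ?_
  rw [mul_assoc, ← pow_add, Nat.add_sub_of_le (mem_range_succ_iff.mp hi)]

lemma sum_negMulLog_const_mul {ι : Type*} (s : Finset ι) (a : ℝ) (x : ι → ℝ) :
    ∑ i ∈ s, negMulLog (a * x i) = (∑ i ∈ s, x i) * negMulLog a + a * ∑ i ∈ s, negMulLog (x i) := by
  simp only [negMulLog_mul, sum_add_distrib, sum_mul, mul_sum]

lemma negMulLog_pow (x : ℝ) (n : ℕ) : negMulLog (x ^ n) = -(n * x ^ n * log x) := by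
  rw [negMulLog, log_pow]
  ring

namespace UnruhChannel

/-- The factor `(1 - z)³ zᵏ` common to all eigenvalues of the channel outputs in block `k`. -/
noncomputable def blockScale (z : ℝ) (k : ℕ) : ℝ := (1 - z) ^ 3 * z ^ k

/-- The trace of block `k` of either channel output, in units of `blockScale z k`. -/
noncomputable def blockTrace (k : ℕ) : ℝ := ((k : ℝ) + 1) * ((k : ℝ) + 2) / 2

/-- The von Neumann entropy, in nats, of the output for the maximally mixed dual-rail input. -/
noncomputable def mixedOutputEntropy (z : ℝ) : ℝ :=
  ∑' k : ℕ, ((k : ℝ) + 2) * negMulLog (blockScale z k * (((k : ℝ) + 1) / 2))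

/-- The von Neumann entropy, in nats, of the output for a pure dual-rail input. The eigenvalue
`0` of each block contributes nothing and is left out. -/
noncomputable def pureOutputEntropy (z : ℝ) : ℝ :=
  ∑' k : ℕ, ∑ m ∈ Icc 1 (k + 1), negMulLog (blockScale z k * (m : ℝ))

/-- The part of the output entropy that is due to the block scales alone, and hence does not
depend on how the trace of a block is distributed over its eigenvalues. -/
noncomputable def scaleEntropy (z : ℝ) : ℝ := ∑' k : ℕ, blockTrace k * negMulLog (blockScale z k)

lemma sum_Icc_natCast_eq_blockTrace (k : ℕ) : ∑ m ∈ Icc 1 (k + 1), (m : ℝ) = blockTrace k := by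
  induction k with
  | zero => norm_num [blockTrace]
  | succ k ih =>
    rw [sum_Icc_succ_top (by omega), ih, blockTrace, blockTrace]
    push_cast
    ring

lemma isBigO_blockTrace : blockTrace =O[atTop] fun k : ℕ ↦ (k : ℝ) ^ 2 := by
  refine (((isBigO_natCast_add_const 1).mul (isBigO_natCast_add_const 2)).const_mul_left
    2⁻¹).congr (fun k ↦ ?_) fun k ↦ (sq _).symm
  rw [blockTrace, div_eq_inv_mul]

lemma mixed_block_entropy (a : ℝ) (k : ℕ) :
    ((k : ℝ) + 2) * negMulLog (a * (((k : ℝ) + 1) / 2)) =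
      blockTrace k * negMulLog a + a * (blockTrace k * (log 2 - log ((k : ℝ) + 1))) := by
  have hhalf : negMulLog (((k : ℝ) + 1) / 2) =
      ((k : ℝ) + 1) / 2 * (log 2 - log ((k : ℝ) + 1)) := by
    rw [negMulLog, log_div (by positivity) two_ne_zero]
    ring
  rw [negMulLog_mul, hhalf, blockTrace]
  ring

lemma pure_block_entropy (a : ℝ) (k : ℕ) :
    ∑ m ∈ Icc 1 (k + 1), negMulLog (a * (m : ℝ)) =
      blockTrace k * negMulLog a + a * ∑ i ∈ range (k + 1), negMulLog ((i : ℝ) + 1) := by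
  rw [sum_negMulLog_const_mul, sum_Icc_natCast_eq_blockTrace, ← Ico_succ_right_eq_Icc,
    sum_Ico_eq_sum_range]
  simp [add_comm]

variable {z : ℝ}

lemma hasSum_blockTrace_mul_geometric (hz : ‖z‖ < 1) :
    HasSum (fun k ↦ blockTrace k * z ^ k) (1 / (1 - z) ^ 3) := by
  convert! hasSum_choose_mul_geometric_of_norm_lt_one 2 hz using 3 with k
  rw [Nat.cast_choose_two, blockTrace]
  push_cast
  ring

lemma summable_blockTrace_mul_log_mul_geometric (hz : ‖z‖ < 1) :
    Summable fun k : ℕ ↦ blockTrace k * log ((k : ℝ) + 1) * z ^ k :=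
  (summable_norm_mul_geometric_of_isBigO_pow hz
    ((isBigO_blockTrace.mul (isBigO_log_natCast_add_const 1)).congr_right
      fun _ ↦ (pow_succ _ 2).symm)).of_norm

lemma hasSum_scaleEntropy (hz : ‖z‖ < 1) :
    HasSum (fun k ↦ blockTrace k * negMulLog (blockScale z k)) (scaleEntropy z) := by
  have hlinear : Summable fun k : ℕ ↦ blockTrace k * k * z ^ k :=
    (summable_norm_mul_geometric_of_isBigO_pow hz
      ((isBigO_blockTrace.mul (isBigO_refl _ _)).congr_right fun _ ↦ (pow_succ _ 2).symm)).of_norm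
  refine Summable.hasSum <|
    (((hasSum_blockTrace_mul_geometric hz).summable.mul_left (negMulLog ((1 - z) ^ 3))).add
      (hlinear.mul_left (-((1 - z) ^ 3 * log z)))).congr fun k ↦ ?_
  rw [blockScale, negMulLog_mul, negMulLog_pow z k]
  ring

theorem mixedOutputEntropy_eq (hz : ‖z‖ < 1) :
    mixedOutputEntropy z = scaleEntropy z + log 2 -
      (1 - z) ^ 3 * ∑' k : ℕ, blockTrace k * log ((k : ℝ) + 1) * z ^ k := by
  have hz1 : 1 - z ≠ 0 := sub_ne_zero.mpr (lt_of_abs_lt hz).ne'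
  have hlog_two := (hasSum_blockTrace_mul_geometric hz).mul_left ((1 - z) ^ 3 * log 2)
  have hlog := (summable_blockTrace_mul_log_mul_geometric hz).hasSum.mul_left ((1 - z) ^ 3)
  have hblocks : HasSum
      (fun k : ℕ ↦ ((k : ℝ) + 2) * negMulLog (blockScale z k * (((k : ℝ) + 1) / 2))) _ :=
    (((hasSum_scaleEntropy hz).add hlog_two).sub hlog).congr_fun fun k ↦ by
      rw [mixed_block_entropy, blockScale]
      ring
  rw [mixedOutputEntropy, hblocks.tsum_eq]
  field_simp

lemma tsum_negMulLog_mul_geometric (hz : ‖z‖ < 1) :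
    ∑' k : ℕ, negMulLog ((k : ℝ) + 1) * z ^ k =
      -∑' j : ℕ, ((j : ℝ) + 2) * log ((j : ℝ) + 2) * z ^ (j + 1) := by
  rw [(summable_norm_mul_geometric_of_isBigO_pow hz
    (isBigO_negMulLog_natCast_add_const 1)).of_norm.tsum_eq_zero_add, ← tsum_neg]
  simp [negMulLog, add_assoc, one_add_one_eq_two, -neg_add_rev]

theorem pureOutputEntropy_eq (hz : ‖z‖ < 1) :
    pureOutputEntropy z = scaleEntropy z -
      (1 - z) ^ 2 * ∑' j : ℕ, ((j : ℝ) + 2) * log ((j : ℝ) + 2) * z ^ (j + 1) := by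
  have hpartial_sums := (hasSum_sum_range_mul_geometric hz
    (summable_norm_mul_geometric_of_isBigO_pow hz
      (isBigO_negMulLog_natCast_add_const 1))).mul_left ((1 - z) ^ 3)
  have hblocks : HasSum
      (fun k : ℕ ↦ ∑ m ∈ Icc 1 (k + 1), negMulLog (blockScale z k * (m : ℝ))) _ :=
    ((hasSum_scaleEntropy hz).add hpartial_sums).congr_fun fun k ↦ by
      rw [pure_block_entropy, blockScale]
      ring
  rw [pureOutputEntropy, hblocks.tsum_eq, tsum_negMulLog_mul_geometric hz]
  field_simp
  ring

end UnruhChannel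

/-- For every `0 < z < 1`, the single-letter private classical capacity lower bound (in
nats) `ln 2 - H(N(I/2)) + max_ψ H(N(|ψ⟩⟨ψ|))` has the closed form
`(1-z)³ ∑_{k=0}^∞ ((k+1)(k+2)/2) ln(k+1) z^k - (1-z)² ∑_{k=2}^∞ k (ln k) z^{k-1}`,
i.e. the paper's `C_p^{(1)} = (1-z)² ∂_z[∂_s Li_s(z)|_{s=0}]
- ((1-z)³/2) ∂_z²[z ∂_s Li_s(z)|_{s=0}]`. -/
theorem private_classical_capacity_lower_bound (z : ℝ) (hz0 : 0 < z) (hz1 : z < 1) :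
    Real.log 2 -
        (∑' k : ℕ,
          (-(((k : ℝ) + 2) * ((1 - z) ^ 3 * z ^ k * ((k : ℝ) + 1) / 2) *
            Real.log ((1 - z) ^ 3 * z ^ k * ((k : ℝ) + 1) / 2)))) +
        (∑' k : ℕ, ∑ m ∈ Finset.Icc 1 (k + 1),
          (-((1 - z) ^ 3 * z ^ k * (m : ℝ) *
            Real.log ((1 - z) ^ 3 * z ^ k * (m : ℝ))))) =
      (1 - z) ^ 3 *
          (∑' k : ℕ, (((k : ℝ) + 1) * ((k : ℝ) + 2) / 2) * Real.log ((k : ℝ) + 1) * z ^ k) -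
        (1 - z) ^ 2 *
          (∑' j : ℕ, ((j : ℝ) + 2) * Real.log ((j : ℝ) + 2) * z ^ (j + 1)) := by
  have hz : ‖z‖ < 1 := by rwa [norm_of_nonneg hz0.le]
  calc
    _ = log 2 - UnruhChannel.mixedOutputEntropy z + UnruhChannel.pureOutputEntropy z := by
      simp only [UnruhChannel.mixedOutputEntropy, UnruhChannel.pureOutputEntropy,
        UnruhChannel.blockScale, negMulLog, neg_mul, mul_neg, mul_assoc, mul_div_assoc]
    _ = _ := by
      rw [UnruhChannel.mixedOutputEntropy_eq hz, UnruhChannel.pureOutputEntropy_eq hz]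
      simp only [UnruhChannel.blockTrace]
      ring
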